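/- arXiv:2501.11215 — 7 statements merged into one kernel-verified Lean document; each statement's English description precedes it below -/
import Mathlib

section
/- Let H = (F, θ₀, θ₁, θ₂) be a connected combinatorial hypermap and let A ⊆ E(H), with A^c = E(H) ∖ A. Then the Euler characteristic of the partial dual satisfies χ(H^A) = χ(A) + χ(A^c) − 2·v(H). -/
open Classical

/-- A pre-hypermap on a set of flags `F`: three structure maps `θ₀, θ₁, θ₂`.
It is a genuine combinatorial hypermap when the three maps are
fixed-point-free involutions (see `PreHypermap.IsHypermap`). -/
structure PreHypermap (F : Type*) where
  theta : Fin 3 → F → F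

namespace PreHypermap

variable {F : Type*}

/-- `H` is a combinatorial hypermap: `θ₀, θ₁, θ₂` are fixed-point-free involutions. -/
def IsHypermap (H : PreHypermap F) : Prop :=
  ∀ i : Fin 3, Function.Involutive (H.theta i) ∧ ∀ x : F, H.theta i x ≠ x

/-- The equivalence relation on `F` generated by a set of functions `F → F`;
for a set of involutions, two flags are related iff they are in the same orbit
of the subgroup generated by those involutions. -/
def orbitRel (fs : Set (F → F)) : F → F → Prop :=
  Relation.EqvGen (fun x y => ∃ f ∈ fs, f x = y)

/-- The setoid of orbits of the subgroup generated by a set of involutions. -/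
def orbitSetoid (fs : Set (F → F)) : Setoid F :=
  Relation.EqvGen.setoid (fun x y => ∃ f ∈ fs, f x = y)

/-- The number of orbits on `F` of the subgroup generated by a set of involutions. -/
noncomputable def orbitCount (fs : Set (F → F)) : ℕ :=
  Nat.card (Quotient (orbitSetoid fs))

/-- `v H`: the number of vertices, i.e. orbits of `⟨θ₁, θ₂⟩`. -/
noncomputable def v (H : PreHypermap F) : ℕ := orbitCount {H.theta 1, H.theta 2}

/-- `e H`: the number of hyperedges, i.e. orbits of `⟨θ₀, θ₂⟩`. -/
noncomputable def e (H : PreHypermap F) : ℕ := orbitCount {H.theta 0, H.theta 2}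

/-- `f H`: the number of faces, i.e. orbits of `⟨θ₀, θ₁⟩`. -/
noncomputable def f (H : PreHypermap F) : ℕ := orbitCount {H.theta 0, H.theta 1}

/-- `c H`: the number of components, i.e. orbits of `⟨θ₀, θ₁, θ₂⟩`. -/
noncomputable def c (H : PreHypermap F) : ℕ :=
  orbitCount {H.theta 0, H.theta 1, H.theta 2}

/-- `H` is connected if it has exactly one component. -/
def Connected (H : PreHypermap F) : Prop := H.c = 1

/-- The Euler characteristic `χ(H) = v + e + f - |F|/2`. -/
noncomputable def chi (H : PreHypermap F) : ℤ :=
  (H.v : ℤ) + (H.e : ℤ) + (H.f : ℤ) - (Nat.card F : ℤ) / 2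

/-- The Euler genus `ε(H) = 2 c(H) - χ(H)`. -/
noncomputable def eulerGenus (H : PreHypermap F) : ℤ := 2 * (H.c : ℤ) - H.chi

/-- `H` is orientable: there is `o : F → {+1, -1}` with `o (θᵢ x) = - o x` for all `i, x`. -/
def Orientable (H : PreHypermap F) : Prop :=
  ∃ o : F → ℤ, (∀ x : F, o x = 1 ∨ o x = -1) ∧
    ∀ (i : Fin 3) (x : F), o (H.theta i x) = - o x

/-- The set `E(H)` of hyperedges of `H`, each hyperedge being its set of flags
(an orbit of `⟨θ₀, θ₂⟩`). -/
def edges (H : PreHypermap F) : Set (Set F) :=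
  {s : Set F | ∃ x : F, s = {y : F | orbitRel {H.theta 0, H.theta 2} x y}}

/-- The geometric dual `H* = (F, θ₂, θ₁, θ₀)`. -/
def dual (H : PreHypermap F) : PreHypermap F where
  theta := fun i => H.theta (2 - i)

/-- The partial dual of `H` with respect to a set `S` of flags (interchange `θ₀` and
`θ₂` on `S`); for `A ⊆ E(H)` the partial dual `H^A` is `H.pdual (⋃₀ A)`. -/
noncomputable def pdual (H : PreHypermap F) (S : Set F) : PreHypermap F where
  theta := fun i x =>
    if i = 1 then H.theta 1 x
    else if x ∈ S then H.theta (2 - i) x else H.theta i x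

/-- `f(A)` for `A ⊆ E(H)`: the number of orbits of `⟨θ₁, θ₂^A⟩` (which equals `v(H^A)`). -/
noncomputable def subf (H : PreHypermap F) (A : Set (Set F)) : ℕ :=
  (H.pdual (⋃₀ A)).v

/-- `c(A)` for `A ⊆ E(H)`: the number of orbits of the subgroup generated by `θ₁`, `θ₂`
and the permutation equal to `θ₀` on `S(A)` and the identity elsewhere. -/
noncomputable def subc (H : PreHypermap F) (A : Set (Set F)) : ℕ :=
  orbitCount {H.theta 1, H.theta 2, fun x => if x ∈ ⋃₀ A then H.theta 0 x else x}

/-- `χ(A) = v(A) + e(A) + f(A) - |S(A)|/2` for `A ⊆ E(H)`, where `v(A) = v(H)`,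
`e(A) = |A|`, `f(A) = v(H^A)` and `S(A) = ⋃₀ A`. -/
noncomputable def subchi (H : PreHypermap F) (A : Set (Set F)) : ℤ :=
  (H.v : ℤ) + (A.ncard : ℤ) + (H.subf A : ℤ) - ((⋃₀ A).ncard : ℤ) / 2

/-- `ε(A) = 2 c(A) - χ(A)` for `A ⊆ E(H)`. -/
noncomputable def subeps (H : PreHypermap F) (A : Set (Set F)) : ℤ :=
  2 * (H.subc A : ℤ) - H.subchi A

/-- The hyperedge set of `H` as a finset. -/
noncomputable def edgeFinset (H : PreHypermap F) [Fintype F] : Finset (Set F) :=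
  (Set.toFinite H.edges).toFinset

/-- The partial-dual Euler-genus polynomial `∂ε_H(z) = Σ_{A ⊆ E(H)} z^(ε(H^A))`. -/
noncomputable def pdPoly (H : PreHypermap F) [Fintype F] : Polynomial ℕ :=
  ∑ A ∈ H.edgeFinset.powerset,
    Polynomial.X ^ ((H.pdual (⋃₀ (A : Set (Set F)))).eulerGenus).toNat

/-- The partial-dual orientable-genus polynomial `∂Γ_H(z) = Σ_{A ⊆ E(H)} z^(ε(H^A)/2)`. -/
noncomputable def pdGammaPoly (H : PreHypermap F) [Fintype F] : Polynomial ℕ :=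
  ∑ A ∈ H.edgeFinset.powerset,
    Polynomial.X ^ (((H.pdual (⋃₀ (A : Set (Set F)))).eulerGenus) / 2).toNat

/-- The join `H₁ ∨ H₂` of two hypermaps on disjoint flag sets, joining the corner
`{x, θ₁ x}` of `H₁` to the corner `{y, θ₁′ y}` of `H₂`. -/
noncomputable def join {F₁ F₂ : Type*} (H₁ : PreHypermap F₁) (H₂ : PreHypermap F₂)
    (x : F₁) (y : F₂) : PreHypermap (F₁ ⊕ F₂) where
  theta := fun i z =>
    if i = 1 then
      if z = Sum.inl x then Sum.inr y
      else if z = Sum.inr y then Sum.inl x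
      else if z = Sum.inl (H₁.theta 1 x) then Sum.inr (H₂.theta 1 y)
      else if z = Sum.inr (H₂.theta 1 y) then Sum.inl (H₁.theta 1 x)
      else Sum.map (H₁.theta 1) (H₂.theta 1) z
    else Sum.map (H₁.theta i) (H₂.theta i) z

/-- The bar-amalgamation `H₁ ⊕ H₂` of two hypermaps on disjoint flag sets, with a new
connecting hyperedge `{p, q, p', q'} = Fin 4` meeting the corner `{x, θ₁ x}` of `H₁`
and the corner `{y, θ₁′ y}` of `H₂`. -/
noncomputable def bar {F₁ F₂ : Type*} (H₁ : PreHypermap F₁) (H₂ : PreHypermap F₂)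
    (x : F₁) (y : F₂) : PreHypermap ((F₁ ⊕ F₂) ⊕ Fin 4) where
  theta := fun i z =>
    if i = 0 then
      match z with
      | .inl (.inl a) => .inl (.inl (H₁.theta 0 a))
      | .inl (.inr b) => .inl (.inr (H₂.theta 0 b))
      | .inr k => .inr (Equiv.swap (0 : Fin 4) 2 (Equiv.swap (1 : Fin 4) 3 k))
    else if i = 2 then
      match z with
      | .inl (.inl a) => .inl (.inl (H₁.theta 2 a))
      | .inl (.inr b) => .inl (.inr (H₂.theta 2 b))
      | .inr k => .inr (Equiv.swap (0 : Fin 4) 1 (Equiv.swap (2 : Fin 4) 3 k))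
    else
      if z = .inl (.inl x) then .inr 0
      else if z = .inr 0 then .inl (.inl x)
      else if z = .inl (.inl (H₁.theta 1 x)) then .inr 1
      else if z = .inr 1 then .inl (.inl (H₁.theta 1 x))
      else if z = .inl (.inr y) then .inr 2
      else if z = .inr 2 then .inl (.inr y)
      else if z = .inl (.inr (H₂.theta 1 y)) then .inr 3
      else if z = .inr 3 then .inl (.inr (H₂.theta 1 y))
      else
        match z with
        | .inl (.inl a) => .inl (.inl (H₁.theta 1 a))
        | .inl (.inr b) => .inl (.inr (H₂.theta 1 b))
        | .inr k => .inr k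

end PreHypermap

namespace PreHypermap

lemma ncard_edges_aux {F : Type} (H : PreHypermap F) : H.edges.ncard = H.e := by
  have h : H.edges = (orbitSetoid {H.theta 0, H.theta 2}).classes := by
    ext s
    constructor
    · rintro ⟨x, rfl⟩
      refine ⟨x, ?_⟩
      ext y
      exact ⟨fun h => Relation.EqvGen.symm _ _ h, fun h => Relation.EqvGen.symm _ _ h⟩
    · rintro ⟨x, rfl⟩
      refine ⟨x, ?_⟩
      ext y
      exact ⟨fun h => Relation.EqvGen.symm _ _ h, fun h => Relation.EqvGen.symm _ _ h⟩
  rw [h]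
  exact (Nat.card_congr (Setoid.quotientEquivClasses _)).symm

lemma pdual_e_aux {F : Type} (H : PreHypermap F) (S : Set F) : (H.pdual S).e = H.e := by
  have h : orbitSetoid {(H.pdual S).theta 0, (H.pdual S).theta 2}
      = orbitSetoid {H.theta 0, H.theta 2} := by
    unfold orbitSetoid
    congr 1
    ext x y
    by_cases hx : x ∈ S <;> simp [pdual, hx, or_comm]
  unfold e orbitCount
  rw [h]

lemma pdual_f_aux {F : Type} (H : PreHypermap F) (S : Set F) :
    (H.pdual S).f = (H.pdual Sᶜ).v := by
  have h : (H.pdual S).theta 0 = (H.pdual Sᶜ).theta 2 := by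
    ext x
    by_cases hx : x ∈ S <;> simp [pdual, hx]
  have h1 : (H.pdual S).theta 1 = (H.pdual Sᶜ).theta 1 := by
    ext x
    simp [pdual]
  unfold f v
  rw [h, h1, Set.pair_comm]

lemma compl_aux {F : Type} (H : PreHypermap F) (A : Set (Set F)) (hA : A ⊆ H.edges) :
    ⋃₀ (H.edges \ A) = (⋃₀ A)ᶜ := by
  have key : ∀ s ∈ H.edges, ∀ x ∈ s, s = {y | orbitRel {H.theta 0, H.theta 2} x y} := by
    rintro s ⟨z, rfl⟩ x hx
    ext y
    exact ⟨fun h => Relation.EqvGen.trans _ _ _ (Relation.EqvGen.symm _ _ hx) h,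
      fun h => Relation.EqvGen.trans _ _ _ hx h⟩
  ext x
  constructor
  · rintro ⟨s, ⟨hs, hsA⟩, hx⟩ ⟨t, ht, hxt⟩
    apply hsA
    rw [key s hs x hx, ← key t (hA ht) x hxt]
    exact ht
  · intro hx
    have hm : x ∈ {y | orbitRel {H.theta 0, H.theta 2} x y} := Relation.EqvGen.refl _
    exact ⟨_, ⟨⟨x, rfl⟩, fun h => hx ⟨_, h, hm⟩⟩, hm⟩

lemma even_aux {F : Type} [Fintype F] (H : PreHypermap F) (hH : H.IsHypermap)
    (A : Set (Set F)) (hA : A ⊆ H.edges) : Even (⋃₀ A).ncard := by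
  rw [Set.ncard_eq_toFinset_card', ← ZMod.natCast_eq_zero_iff_even]
  have : ∑ x ∈ (⋃₀ A).toFinset, (1 : ZMod 2) = 0 := by
    refine Finset.sum_involution (fun x _ => H.theta 0 x) ?_ ?_ ?_ ?_
    · intros; decide
    · intro x _ _; exact (hH 0).2 x
    · intro x hx
      rw [Set.mem_toFinset] at hx ⊢
      obtain ⟨s, hs, hx⟩ := hx
      refine ⟨s, hs, ?_⟩
      obtain ⟨z, rfl⟩ := hA hs
      exact Relation.EqvGen.trans _ _ _ hx (Relation.EqvGen.rel _ _ ⟨_, Or.inl rfl, rfl⟩)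
    · intro x _; exact (hH 0).1 x
  simpa using this

end PreHypermap

open PreHypermap in
/-- Euler-characteristic formula for the partial dual:
`χ(H^A) = χ(A) + χ(A^c) - 2 v(H)`. -/
theorem statement_0 {F : Type} [Fintype F] (H : PreHypermap F)
    (hH : H.IsHypermap) (hconn : H.Connected)
    (A : Set (Set F)) (hA : A ⊆ H.edges) :
    (H.pdual (⋃₀ A)).chi = H.subchi A + H.subchi (H.edges \ A) - 2 * (H.v : ℤ) := by
  obtain ⟨k, hk⟩ := even_aux H hH A hA
  have h1 := Set.ncard_add_ncard_compl (⋃₀ A)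
  have h2 := Set.ncard_sdiff_add_ncard_of_subset hA
  rw [ncard_edges_aux] at h2
  unfold chi subchi subf
  rw [pdual_e_aux, pdual_f_aux, compl_aux H A hA]
  omega
end

section
/- Let H = (F, θ₀, θ₁, θ₂) be a connected combinatorial hypermap and let A ⊆ E(H), with A^c = E(H) ∖ A. Then the Euler genus of the partial dual satisfies ε(H^A) = ε(A) + ε(A^c) + 2·(c(H) − c(A) − c(A^c)) + 2·v(H). -/
open Classical

namespace PreHypermap

theorem aux_orbitCount_congr {F : Type*} {fs gs : Set (F → F)}
    (h : ∀ x y, (∃ f ∈ fs, f x = y) ↔ (∃ f ∈ gs, f x = y)) :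
    orbitCount fs = orbitCount gs := by
  have : (fun x y => ∃ f ∈ fs, f x = y) = (fun x y => ∃ f ∈ gs, f x = y) := by
    funext x y
    exact propext (h x y)
  unfold orbitCount orbitSetoid
  rw [this]

theorem aux_c {F : Type*} (H : PreHypermap F) (S : Set F) : (H.pdual S).c = H.c := by
  apply aux_orbitCount_congr
  intro x y
  by_cases hx : x ∈ S <;> simp [pdual, hx] <;> tauto

theorem aux_e {F : Type*} (H : PreHypermap F) (S : Set F) : (H.pdual S).e = H.e := by
  apply aux_orbitCount_congr
  intro x y
  by_cases hx : x ∈ S <;> simp [pdual, hx] <;> tauto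

theorem aux_f {F : Type*} (H : PreHypermap F) (S : Set F) :
    (H.pdual S).f = (H.pdual Sᶜ).v := by
  apply aux_orbitCount_congr
  intro x y
  by_cases hx : x ∈ S <;> simp [pdual, hx] <;> tauto

theorem aux_mem_edge {F : Type*} (H : PreHypermap F) {s : Set F} (hs : s ∈ H.edges)
    {x : F} (hx : x ∈ s) : s = {y : F | orbitRel {H.theta 0, H.theta 2} x y} := by
  obtain ⟨z, rfl⟩ := hs
  ext y
  exact ⟨fun h => (Relation.EqvGen.symm _ _ hx).trans _ _ _ h,
    fun h => Relation.EqvGen.trans _ _ _ hx h⟩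

theorem aux_compl {F : Type*} (H : PreHypermap F) (A : Set (Set F)) (hA : A ⊆ H.edges) :
    ⋃₀ (H.edges \ A) = (⋃₀ A)ᶜ := by
  ext x
  constructor
  · rintro ⟨s, ⟨hs, hsA⟩, hx⟩ ⟨t, ht, hxt⟩
    apply hsA
    rw [aux_mem_edge H hs hx, ← aux_mem_edge H (hA ht) hxt]
    exact ht
  · intro hx
    refine ⟨{y : F | orbitRel {H.theta 0, H.theta 2} x y}, ⟨⟨x, rfl⟩, fun h => hx ?_⟩, ?_⟩
    · exact ⟨_, h, Relation.EqvGen.refl x⟩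
    · exact Relation.EqvGen.refl x

theorem aux_edges {F : Type*} (H : PreHypermap F) : H.e = H.edges.ncard := by
  have h : H.edges = Set.range (fun q : Quotient (orbitSetoid {H.theta 0, H.theta 2}) =>
      {y : F | q = Quotient.mk _ y}) := by
    ext s
    constructor
    · rintro ⟨x, rfl⟩
      refine ⟨Quotient.mk _ x, ?_⟩
      ext y
      exact Quotient.eq
    · rintro ⟨q, rfl⟩
      induction q using Quotient.inductionOn with
      | h x =>
        refine ⟨x, ?_⟩
        ext y
        exact Quotient.eq
  rw [h, ← Set.image_univ, Set.ncard_image_of_injective, Set.ncard_univ]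
  · rfl
  · intro p q hpq
    induction q using Quotient.inductionOn with
    | h x =>
      have : x ∈ {y : F | p = Quotient.mk (orbitSetoid {H.theta 0, H.theta 2}) y} := by
        have h2 : {y : F | p = Quotient.mk _ y} = {y : F | Quotient.mk _ x = Quotient.mk
          (orbitSetoid {H.theta 0, H.theta 2}) y} := hpq
        rw [h2]
        rfl
      exact this

theorem aux_even {F : Type*} [Fintype F] (H : PreHypermap F) (hH : H.IsHypermap)
    (A : Set (Set F)) (hA : A ⊆ H.edges) : Even (⋃₀ A).ncard := by
  rw [Set.ncard_eq_toFinset_card', ← ZMod.natCast_eq_zero_iff_even]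
  have := Finset.sum_involution (s := (⋃₀ A).toFinset) (f := fun _ => (1 : ZMod 2))
    (fun x _ => H.theta 0 x) (fun _ _ => by decide) (fun x _ _ => (hH 0).2 x)
    (fun x hx => by
      rw [Set.mem_toFinset] at hx ⊢
      obtain ⟨s, hs, hxs⟩ := hx
      refine ⟨s, hs, ?_⟩
      rw [aux_mem_edge H (hA hs) hxs]
      exact Relation.EqvGen.rel _ _ ⟨_, by simp, rfl⟩)
    (fun x _ => (hH 0).1 x)
  simpa using this

end PreHypermap

open PreHypermap in
/-- Euler-genus formula for the partial dual:
`ε(H^A) = ε(A) + ε(A^c) + 2 (c(H) - c(A) - c(A^c)) + 2 v(H)`. -/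
theorem statement_1 {F : Type} [Fintype F] (H : PreHypermap F)
    (hH : H.IsHypermap) (hconn : H.Connected)
    (A : Set (Set F)) (hA : A ⊆ H.edges) :
    (H.pdual (⋃₀ A)).eulerGenus =
      H.subeps A + H.subeps (H.edges \ A)
        + 2 * ((H.c : ℤ) - (H.subc A : ℤ) - (H.subc (H.edges \ A) : ℤ))
        + 2 * (H.v : ℤ) := by
  have hc := aux_compl H A hA
  have h1 := aux_even H hH A hA
  have h2 := aux_even H hH (H.edges \ A) Set.diff_subset
  have h3 : (⋃₀ A).ncard + (⋃₀ (H.edges \ A)).ncard = Nat.card F := by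
    rw [hc]
    exact Set.ncard_add_ncard_compl _
  have h4 : (H.edges \ A).ncard + A.ncard = H.edges.ncard :=
    Set.ncard_diff_add_ncard_of_subset hA
  rw [← aux_edges] at h4
  unfold subeps subchi eulerGenus chi subf
  rw [aux_c, aux_e, aux_f, ← hc, ← h3, ← h4]
  obtain ⟨a, ha⟩ := h1
  obtain ⟨b, hb⟩ := h2
  rw [ha, hb]
  push_cast
  omega
end

section
/- Let H = (F, θ₀, θ₁, θ₂) be a combinatorial hypermap and let A, B ⊆ E(H) (subsets of hyperedges of an iterated partial dual being identified with subsets of E(H) via equality of flag sets). Then (H^A)^B = (H^B)^A = H^{(A ∪ B) ∖ (A ∩ B)}, the partial dual with respect to the symmetric difference of A and B; consequently (H^A)^{(A ∪ B) ∖ (A ∩ B)} = H^B. -/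
open Classical

theorem edges_eq_of_mem {F : Type} (H : PreHypermap F) {s t : Set F} (hs : s ∈ H.edges)
    (ht : t ∈ H.edges) {x : F} (hxs : x ∈ s) (hxt : x ∈ t) : s = t := by
  obtain ⟨a, rfl⟩ := hs
  obtain ⟨b, rfl⟩ := ht
  have h1 : Relation.EqvGen _ a x := hxs
  have h2 : Relation.EqvGen _ b x := hxt
  ext y
  constructor
  · intro h
    exact (h2.trans _ _ _ (h1.symm _ _)).trans _ _ _ h
  · intro h
    exact (h1.trans _ _ _ (h2.symm _ _)).trans _ _ _ h

theorem mem_symm {F : Type} (H : PreHypermap F) {A B : Set (Set F)} (hA : A ⊆ H.edges)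
    (hB : B ⊆ H.edges) (x : F) :
    x ∈ ⋃₀ ((A ∪ B) \ (A ∩ B)) ↔ ¬ (x ∈ ⋃₀ A ↔ x ∈ ⋃₀ B) := by
  have key : ∀ s ∈ A, ∀ t ∈ B, x ∈ s → x ∈ t → s = t :=
    fun s hs t ht h1 h2 => edges_eq_of_mem H (hA hs) (hB ht) h1 h2
  have keyA : ∀ s ∈ A, ∀ t ∈ A, x ∈ s → x ∈ t → s = t :=
    fun s hs t ht h1 h2 => edges_eq_of_mem H (hA hs) (hA ht) h1 h2
  have keyB : ∀ s ∈ B, ∀ t ∈ B, x ∈ s → x ∈ t → s = t :=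
    fun s hs t ht h1 h2 => edges_eq_of_mem H (hB hs) (hB ht) h1 h2
  simp only [Set.mem_sUnion, Set.mem_diff, Set.mem_union, Set.mem_inter_iff]
  grind

theorem pdual_pdual {F : Type} (H : PreHypermap F) (S T U : Set F)
    (h : ∀ x, x ∈ U ↔ ¬ (x ∈ S ↔ x ∈ T)) : (H.pdual S).pdual T = H.pdual U := by
  unfold PreHypermap.pdual
  congr 1
  funext i x
  have := h x
  by_cases h1 : x ∈ S <;> by_cases h2 : x ∈ T <;> fin_cases i <;> simp [h1, h2, this]

open PreHypermap in
/-- `(H^A)^B = (H^B)^A = H^(A Δ B)` and `(H^A)^(A Δ B) = H^B`, where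
`A Δ B = (A ∪ B) \ (A ∩ B)` is the symmetric difference. -/
theorem statement_5 {F : Type} [Fintype F] (H : PreHypermap F)
    (hH : H.IsHypermap) (A B : Set (Set F)) (hA : A ⊆ H.edges) (hB : B ⊆ H.edges) :
    (H.pdual (⋃₀ A)).pdual (⋃₀ B) = (H.pdual (⋃₀ B)).pdual (⋃₀ A) ∧
    (H.pdual (⋃₀ A)).pdual (⋃₀ B) = H.pdual (⋃₀ ((A ∪ B) \ (A ∩ B))) ∧
    (H.pdual (⋃₀ A)).pdual (⋃₀ ((A ∪ B) \ (A ∩ B))) = H.pdual (⋃₀ B) := by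
  have h := mem_symm H hA hB
  have e := pdual_pdual H (⋃₀ A) (⋃₀ B) _ h
  refine ⟨?_, e, ?_⟩
  · rw [e]
    refine (pdual_pdual H (⋃₀ B) (⋃₀ A) _ fun x => ?_).symm
    rw [h x]
    tauto
  · refine pdual_pdual H _ _ _ fun x => ?_
    rw [h x]
    tauto
end

section
/- Let H = (F, θ₀, θ₁, θ₂) be a connected orientable combinatorial hypermap. Then for every A ⊆ E(H) the partial-dual Euler genus ε(H^A) is even; consequently the partial-dual Euler-genus polynomial ∂ε_H(z) is a polynomial in z², i.e. ∂ε_H(z) = ∂Γ_H(z²) where ∂Γ_H(z) = Σ_{A ⊆ E(H)} z^{ε(H^A)/2}. -/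
open Classical

open Classical in
theorem perm_card_aux {P : Type} [Fintype P] [DecidableEq P] (σ : Equiv.Perm P) :
    Nat.card (Quotient (Equiv.Perm.SameCycle.setoid σ)) =
      σ.cycleType.card + Fintype.card (Function.fixedPoints σ) := by
  have h1 : σ.cycleType.card = Fintype.card σ.cycleFactorsFinset := by
    rw [Equiv.Perm.cycleType_def]; simp
  rw [h1, ← Fintype.card_sum, ← Nat.card_eq_fintype_card]
  let g : P → σ.cycleFactorsFinset ⊕ Function.fixedPoints σ := fun x =>
    if h : σ x = x then Sum.inr ⟨x, h⟩
    else Sum.inl ⟨σ.cycleOf x, by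
      rw [Equiv.Perm.cycleOf_mem_cycleFactorsFinset_iff]; simpa using h⟩
  have key : ∀ x y, σ.SameCycle x y ↔ g x = g y := by
    intro x y
    simp only [g]
    by_cases hx : σ x = x <;> by_cases hy : σ y = y
    · simp only [hx, hy, dif_pos, Sum.inr.injEq, Subtype.mk.injEq]
      constructor
      · intro h
        exact Subtype.ext (h.eq_of_left hx)
      · intro h
        have h' : x = y := congrArg Subtype.val h
        rw [h']
    · simp only [hx, hy, dif_pos, dif_neg, not_false_eq_true, reduceCtorEq, iff_false]
      intro h; exact hy (h.apply_eq_self_iff.1 hx)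
    · simp only [hx, hy, dif_pos, dif_neg, not_false_eq_true, reduceCtorEq, iff_false]
      intro h; exact hx (h.apply_eq_self_iff.2 hy)
    · simp only [hx, hy, dif_neg, not_false_eq_true, Sum.inl.injEq, Subtype.mk.injEq]
      rw [Equiv.Perm.sameCycle_iff_cycleOf_eq_of_mem_support] <;> simpa
  refine Nat.card_congr (Equiv.ofBijective
    (Quotient.lift g fun x y h => (key x y).1 h) ⟨?_, ?_⟩)
  · rintro ⟨x⟩ ⟨y⟩ h
    exact Quotient.sound ((key x y).2 h)
  · rintro (⟨c, hc⟩ | ⟨x, hx⟩)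
    · obtain ⟨x, hx⟩ := ((Equiv.Perm.mem_cycleFactorsFinset_iff.1 hc).1).nonempty_support
      refine ⟨Quotient.mk _ x, ?_⟩
      have hxs := Equiv.Perm.mem_cycleFactorsFinset_support_le hc hx
      have h2 : σ x ≠ x := by simpa using hxs
      have h3 := Equiv.Perm.cycle_is_cycleOf hx hc
      simp [g, h2, h3]
    · refine ⟨Quotient.mk _ x, ?_⟩
      have hx' : σ x = x := hx
      simp [g, hx']

open Classical in
theorem perm_sign_aux {P : Type} [Fintype P] [DecidableEq P] (σ : Equiv.Perm P) :
    Equiv.Perm.sign σ =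
      (-1) ^ (Nat.card (Quotient (Equiv.Perm.SameCycle.setoid σ)) + Fintype.card P) := by
  rw [perm_card_aux, Equiv.Perm.sign_of_cycleType, Equiv.Perm.sum_cycleType]
  have h : Fintype.card (Function.fixedPoints σ) + σ.support.card = Fintype.card P := by
    have := σ.support.card_compl_add_card
    rw [← this]
    congr 1
    rw [Fintype.card_of_subtype]
    intro x; simp [Function.IsFixedPt]
  rw [← h, show σ.cycleType.card + Fintype.card (Function.fixedPoints σ) +
    (Fintype.card (Function.fixedPoints σ) + σ.support.card) =
    (σ.support.card + σ.cycleType.card) + 2 * Fintype.card (Function.fixedPoints σ) by ring,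
    pow_add _ _ (2 * _), pow_mul]
  simp

def posPerm {F : Type} (o : F → ℤ) (a b : F → F)
    (ha : Function.Involutive a) (hb : Function.Involutive b)
    (hoa : ∀ x, o (a x) = - o x) (hob : ∀ x, o (b x) = - o x) :
    Equiv.Perm {x : F // o x = 1} where
  toFun x := ⟨a (b x), by rw [hoa, hob, x.2]; rfl⟩
  invFun x := ⟨b (a x), by rw [hob, hoa, x.2]; rfl⟩
  left_inv x := by ext; simp [ha (b x), hb x.1]
  right_inv x := by ext; simp [hb (a x), ha x.1]

open PreHypermap in
theorem orbitCount_aux {F : Type} (o : F → ℤ) (ho : ∀ x, o x = 1 ∨ o x = -1) (a b : F → F)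
    (ha : Function.Involutive a) (hb : Function.Involutive b)
    (hoa : ∀ x, o (a x) = - o x) (hob : ∀ x, o (b x) = - o x) :
    orbitCount {a, b} =
      Nat.card (Quotient (Equiv.Perm.SameCycle.setoid (posPerm o a b ha hb hoa hob))) := by
  set σ := posPerm o a b ha hb hoa hob with hσ
  let S := Equiv.Perm.SameCycle.setoid σ
  have relA : ∀ x, orbitSetoid {a, b} x (a x) := fun x =>
    Relation.EqvGen.rel _ _ ⟨a, by simp, rfl⟩
  have relB : ∀ x, orbitSetoid {a, b} x (b x) := fun x =>
    Relation.EqvGen.rel _ _ ⟨b, by simp, rfl⟩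
  have relS : ∀ x, orbitSetoid {a, b} x.1 (σ x).1 := fun x =>
    (orbitSetoid {a, b}).trans (relB x.1) (relA (b x.1))
  have relZ : ∀ (x) (k : ℤ), orbitSetoid {a, b} x.1 ((σ ^ k) x).1 := by
    intro x k
    induction k using Int.induction_on with
    | zero => simpa using (orbitSetoid {a, b}).refl x.1
    | succ i ih =>
      rw [add_comm, zpow_add, zpow_one]
      exact (orbitSetoid {a, b}).trans ih (relS _)
    | pred i ih =>
      refine (orbitSetoid {a, b}).trans ih ((orbitSetoid {a, b}).symm ?_)
      have := relS ((σ ^ (-(i:ℤ) - 1)) x)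
      rw [← Equiv.Perm.mul_apply, ← zpow_one_add] at this
      simpa using this
  let q : {x : F // o x = 1} → Quotient S := Quotient.mk S
  have sS : ∀ x, q x = q (σ x) := fun x =>
    Quotient.sound (⟨1, by simp⟩ : σ.SameCycle x (σ x))
  let g : F → Quotient S := fun x =>
    if h : o x = 1 then q ⟨x, h⟩
    else q ⟨a x, by rw [hoa, (ho x).resolve_left h]; rfl⟩
  have gr : ∀ x y, orbitSetoid {a, b} x y → g x = g y := by
    intro x y h
    induction h with
    | rel x y h =>
      obtain ⟨f, hf, rfl⟩ := h
      rcases hf with rfl | rfl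
      · rcases ho x with h | h
        · have h' : ¬ o (f x) = 1 := by rw [hoa, h]; decide
          simp only [g, dif_pos h, dif_neg h']
          congr 2; exact (ha x).symm
        · have h' : o (f x) = 1 := by rw [hoa, h]; decide
          have h0 : ¬ o x = 1 := by rw [h]; decide
          simp only [g, dif_pos h', dif_neg h0]
      · rcases ho x with h | h
        · have h' : ¬ o (f x) = 1 := by rw [hob, h]; decide
          simp only [g, dif_pos h, dif_neg h']
          exact sS _
        · have h' : o (f x) = 1 := by rw [hob, h]; decide
          have h0 : ¬ o x = 1 := by rw [h]; decide
          simp only [g, dif_pos h', dif_neg h0]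
          rw [sS ⟨f x, h'⟩]
          congr 1; ext
          change a x = a (f (f x))
          rw [hb x]
    | refl x => rfl
    | symm x y _ ih => exact ih.symm
    | trans x y z _ _ i1 i2 => exact i1.trans i2
  refine Nat.card_congr
    { toFun := Quotient.lift g gr
      invFun := Quotient.lift (fun x => Quotient.mk (orbitSetoid {a, b}) x.1) ?_
      left_inv := ?_
      right_inv := ?_ }
  · rintro x y ⟨k, rfl⟩
    exact Quotient.sound (relZ x k)
  · rintro ⟨x⟩
    rcases ho x with h | h
    · change Quotient.lift _ _ (g x) = _
      simp only [g, dif_pos h]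
      rfl
    · have h0 : ¬ o x = 1 := by rw [h]; decide
      change Quotient.lift _ _ (g x) = _
      simp only [g, dif_neg h0]
      exact Quotient.sound ((orbitSetoid {a, b}).symm (relA x))
  · rintro ⟨x, hx⟩
    change g x = _
    simp only [g, dif_pos hx]
    rfl

open PreHypermap in
theorem even_eulerGenus {F : Type} [Fintype F] (G : PreHypermap F)
    (hG : G.IsHypermap) (hor : G.Orientable) : Even G.eulerGenus := by
  obtain ⟨o, ho, hn⟩ := hor
  have hi := fun i => (hG i).1
  let P := {x : F // o x = 1}
  have hcard : Fintype.card F = 2 * Fintype.card P := by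
    have e : {x : F // o x = 1} ≃ {x : F // ¬ o x = 1} :=
      { toFun := fun x => ⟨G.theta 0 x, by rw [hn, x.2]; decide⟩
        invFun := fun x => ⟨G.theta 0 x, by rw [hn, (ho x).resolve_left x.2]; rfl⟩
        left_inv := fun x => by ext; exact hi 0 x.1
        right_inv := fun x => by ext; exact hi 0 x.1 }
    have h1 := Fintype.card_congr e
    have h2 := Fintype.card_congr (Equiv.sumCompl (fun x : F => o x = 1))
    rw [Fintype.card_sum] at h2
    change _ = 2 * Fintype.card {x : F // o x = 1}
    omega
  have cnt := fun i j => orbitCount_aux o ho (G.theta i) (G.theta j) (hi i) (hi j) (hn i) (hn j)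
  have sg := fun i j => perm_sign_aux (posPerm o (G.theta i) (G.theta j) (hi i) (hi j) (hn i) (hn j))
  have hmul : posPerm o (G.theta 0) (G.theta 1) (hi 0) (hi 1) (hn 0) (hn 1) *
      posPerm o (G.theta 1) (G.theta 2) (hi 1) (hi 2) (hn 1) (hn 2) =
      posPerm o (G.theta 0) (G.theta 2) (hi 0) (hi 2) (hn 0) (hn 2) := by
    ext x
    change G.theta 0 (G.theta 1 (G.theta 1 (G.theta 2 x))) = G.theta 0 (G.theta 2 x)
    rw [hi 1]
  have hs := congrArg Equiv.Perm.sign hmul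
  rw [map_mul, sg, sg, sg, ← cnt, ← cnt, ← cnt, ← pow_add] at hs
  have h3 : Even ((orbitCount {G.theta 0, G.theta 1} + Fintype.card P) +
     (orbitCount {G.theta 1, G.theta 2} + Fintype.card P) +
     (orbitCount {G.theta 0, G.theta 2} + Fintype.card P)) := by
    rw [← neg_one_pow_eq_one_iff_even (R := ℤ) (by decide)]
    have : ((-1 : ℤˣ)) ^ ((orbitCount {G.theta 0, G.theta 1} + Fintype.card P) +
     (orbitCount {G.theta 1, G.theta 2} + Fintype.card P) +
     (orbitCount {G.theta 0, G.theta 2} + Fintype.card P)) = 1 := by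
      rw [pow_add, hs, ← pow_add, ← two_mul, pow_mul]; simp
    simpa using congrArg (Units.val) this
  unfold eulerGenus chi
  change Even ((orbitCount {G.theta 0, G.theta 1} + Fintype.card P) +
     (G.v + Fintype.card P) + (G.e + Fintype.card P)) at h3
  change Even ((G.f + Fintype.card P) + (G.v + Fintype.card P) + (G.e + Fintype.card P)) at h3
  rw [Nat.card_eq_fintype_card, hcard]
  rw [Nat.even_iff] at h3
  rw [Int.even_iff]
  push_cast
  omega

open PreHypermap in
theorem pdual_aux {F : Type} (H : PreHypermap F) (hH : H.IsHypermap) (hor : H.Orientable)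
    (A : Set (Set F)) (hA : A ⊆ H.edges) :
    (H.pdual (⋃₀ A)).IsHypermap ∧ (H.pdual (⋃₀ A)).Orientable := by
  have inv1 : ∀ i, i ≠ 1 → ∀ x, x ∈ ⋃₀ A → H.theta i x ∈ ⋃₀ A := by
    rintro i hi x ⟨s, hs, hx⟩
    refine ⟨s, hs, ?_⟩
    obtain ⟨y, rfl⟩ := hA hs
    refine Relation.EqvGen.trans _ _ _ hx (Relation.EqvGen.rel _ _ ⟨H.theta i, ?_, rfl⟩)
    fin_cases i <;> simp at hi ⊢
  have inv : ∀ i, i ≠ 1 → ∀ x, H.theta i x ∈ ⋃₀ A ↔ x ∈ ⋃₀ A := by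
    intro i hi x
    refine ⟨fun h => ?_, inv1 i hi x⟩
    have := inv1 i hi _ h
    rwa [(hH i).1 x] at this
  have two : ∀ i : Fin 3, i ≠ 1 → 2 - i ≠ 1 := by decide
  generalize ⋃₀ A = S at *
  constructor
  · intro i
    by_cases hi : i = 1
    · subst hi
      exact hH 1
    constructor
    · intro x
      by_cases hx : x ∈ S
      · have := (inv _ (two i hi) x).2 hx
        simp only [pdual, hi, hx, this, if_true, if_false]
        exact (hH _).1 x
      · have := mt (inv i hi x).1 hx
        simp only [pdual, hi, hx, this, if_false]
        exact (hH _).1 x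
    · intro x
      simp only [pdual, hi, if_false]
      split_ifs
      · exact (hH _).2 x
      · exact (hH _).2 x
  · obtain ⟨o, ho, hn⟩ := hor
    refine ⟨o, ho, fun i x => ?_⟩
    simp only [pdual]
    split_ifs <;> exact hn _ _

open PreHypermap in
/-- For a connected orientable hypermap every partial-dual Euler genus is even, and
`∂ε_H(z) = ∂Γ_H(z²)`. -/
theorem statement_8 {F : Type} [Fintype F] (H : PreHypermap F)
    (hH : H.IsHypermap) (hconn : H.Connected) (hor : H.Orientable) :
    (∀ A ⊆ H.edges, Even (H.pdual (⋃₀ A)).eulerGenus) ∧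
    H.pdPoly = H.pdGammaPoly.comp (Polynomial.X ^ 2) := by
  have key : ∀ A ⊆ H.edges, Even (H.pdual (⋃₀ A)).eulerGenus := fun A hA =>
    even_eulerGenus _ (pdual_aux H hH hor A hA).1 (pdual_aux H hH hor A hA).2
  refine ⟨key, ?_⟩
  unfold pdPoly pdGammaPoly
  rw [Polynomial.sum_comp]
  refine Finset.sum_congr rfl fun A hA => ?_
  rw [Polynomial.X_pow_comp, ← pow_mul]
  congr 1
  have hA' : (A : Set (Set F)) ⊆ H.edges := by
    intro s hs
    have := Finset.mem_powerset.1 hA hs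
    simpa [edgeFinset] using this
  have := Int.even_iff.1 (key _ hA')
  omega
end

section
/- For every positive integer N there exist a connected combinatorial hypermap H and integers a < b such that a and b both belong to the set {ε(H^A) : A ⊆ E(H)}, no element of this set lies strictly between a and b, and b − a − 1 ≥ N. In other words, gaps in the spectrum of the partial-dual Euler-genus polynomial can be arbitrarily large. -/
open Classical

namespace GapProof
open PreHypermap

abbrev C (m : ℕ) := ZMod m × Bool

def t0 {m : ℕ} (x : C m) : C m := (x.1, !x.2)
def t2 {m : ℕ} (x : C m) : C m := if x.2 then (x.1 + 1, false) else (x.1 - 1, true)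

lemma t0_inv {m : ℕ} (x : C m) : t0 (t0 x) = x := by simp [t0]
lemma t2_inv {m : ℕ} (x : C m) : t2 (t2 x) = x := by
  obtain ⟨i, b⟩ := x
  cases b <;> simp [t2]
lemma t0_ne {m : ℕ} (x : C m) : t0 x ≠ x := by
  obtain ⟨i, b⟩ := x
  cases b <;> simp [t0]
lemma t2_ne {m : ℕ} (x : C m) : t2 x ≠ x := by
  obtain ⟨i, b⟩ := x
  cases b <;> simp [t2]

def K (m : ℕ) (p : Bool → Bool) : PreHypermap (Bool × C m) where
  theta := ![fun x => (x.1, if p x.1 then t2 x.2 else t0 x.2), fun x => (!x.1, x.2),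
    fun x => (x.1, if p x.1 then t0 x.2 else t2 x.2)]

lemma K_hyper (m : ℕ) (p : Bool → Bool) : (K m p).IsHypermap := by
  intro i
  fin_cases i
  · refine ⟨fun x => ?_, fun x => ?_⟩ <;> obtain ⟨s, x⟩ := x <;> cases h : p s <;>
      simp [K, h, t0_inv, t2_inv, t0_ne, t2_ne]
  · refine ⟨fun x => ?_, fun x => ?_⟩ <;> obtain ⟨s, x⟩ := x <;> simp [K]
  · refine ⟨fun x => ?_, fun x => ?_⟩ <;> obtain ⟨s, x⟩ := x <;> cases h : p s <;>
      simp [K, h, t0_inv, t2_inv, t0_ne, t2_ne]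

lemma conn {m : ℕ} [NeZero m] (R : C m → C m → Prop) (hR : Equivalence R)
    (h0 : ∀ x, R x (t0 x)) (h2 : ∀ x, R x (t2 x)) (x y : C m) : R x y := by
  have key : ∀ n : ℕ, R (0, false) ((n : ZMod m), false) := by
    intro n
    induction n with
    | zero => simpa using hR.refl _
    | succ n ih =>
      have a := h0 ((n : ZMod m), false)
      have b := h2 ((n : ZMod m), true)
      simp only [t0, t2] at a b
      push_cast
      exact hR.trans ih (hR.trans a (by simpa using b))
  have key2 : ∀ z : C m, R (0, false) z := by
    rintro ⟨i, b⟩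
    have k := key i.val
    rw [ZMod.natCast_zmod_val] at k
    cases b
    · exact k
    · exact hR.trans k (by simpa [t0] using h0 (i, false))
  exact hR.trans (hR.symm (key2 x)) (key2 y)

lemma orb_equiv {F : Type*} (fs : Set (F → F)) : Equivalence (orbitRel fs) :=
  Relation.EqvGen.is_equivalence _

lemma orb_step {F : Type*} {fs : Set (F → F)} {f : F → F} (hf : f ∈ fs) (x : F) :
    orbitRel fs x (f x) := Relation.EqvGen.rel _ _ ⟨f, hf, rfl⟩

lemma orb_inv {F β : Type*} {fs : Set (F → F)} (q : F → β)
    (hq : ∀ f ∈ fs, ∀ x, q (f x) = q x) {x y : F} (h : orbitRel fs x y) : q x = q y := by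
  induction h with
  | rel x y h => obtain ⟨f, hf, rfl⟩ := h; exact (hq f hf x).symm
  | refl => rfl
  | symm _ _ _ ih => exact ih.symm
  | trans _ _ _ _ _ a b => exact a.trans b

lemma orb_count {F β : Type*} {fs : Set (F → F)} (q : F → β) (hs : Function.Surjective q)
    (hq : ∀ f ∈ fs, ∀ x, q (f x) = q x) (h : ∀ x y, q x = q y → orbitRel fs x y) :
    orbitCount fs = Nat.card β := by
  unfold orbitCount
  refine Nat.card_congr (Equiv.ofBijective
    (Quotient.lift q (fun a b hab => orb_inv q hq hab)) ⟨?_, ?_⟩)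
  · intro a b
    induction a using Quotient.inductionOn
    induction b using Quotient.inductionOn
    intro hab
    exact Quotient.sound (h _ _ hab)
  · intro b
    obtain ⟨a, rfl⟩ := hs b
    exact ⟨Quotient.mk _ a, rfl⟩

lemma edge_rel {m : ℕ} [NeZero m] (p : Bool → Bool) (x y : Bool × C m) :
    orbitRel {(K m p).theta 0, (K m p).theta 2} x y ↔ x.1 = y.1 := by
  constructor
  · apply orb_inv
    rintro f (rfl | rfl) x <;> simp [K]
  · obtain ⟨s, x⟩ := x
    obtain ⟨s', y⟩ := y
    rintro ⟨⟩
    have hE := orb_equiv {(K m p).theta 0, (K m p).theta 2}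
    have a0 := fun z => orb_step (fs := {(K m p).theta 0, (K m p).theta 2})
      (f := (K m p).theta 0) (by simp) (s, z)
    have a2 := fun z => orb_step (fs := {(K m p).theta 0, (K m p).theta 2})
      (f := (K m p).theta 2) (by simp) (s, z)
    refine conn (fun x y => orbitRel {(K m p).theta 0, (K m p).theta 2} (s, x) (s, y))
      ⟨fun _ => hE.refl _, fun h => hE.symm h, fun h h' => hE.trans h h'⟩ ?_ ?_ x y
    · intro z
      cases h : p s
      · simpa [K, h] using a0 z
      · simpa [K, h] using a2 z
    · intro z
      cases h : p s
      · simpa [K, h] using a2 z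
      · simpa [K, h] using a0 z

lemma e_eq {m : ℕ} [NeZero m] (p : Bool → Bool) : (K m p).e = 2 := by
  unfold PreHypermap.e
  rw [orb_count (β := Bool) Prod.fst Prod.fst_surjective]
  · simp
  · rintro f (rfl | rfl) x <;> simp [K]
  · exact fun x y h => (edge_rel p x y).2 h

lemma orb_mono {F : Type*} {fs gs : Set (F → F)} (h : fs ⊆ gs) {x y : F}
    (hx : orbitRel fs x y) : orbitRel gs x y :=
  Relation.EqvGen.mono (fun _ _ ⟨f, hf, e⟩ => ⟨f, h hf, e⟩) _ _ hx

lemma c_eq {m : ℕ} [NeZero m] (p : Bool → Bool) : (K m p).c = 1 := by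
  unfold PreHypermap.c
  rw [orb_count (β := Unit) (fun _ => ()) (fun _ => ⟨(true, 0, true), rfl⟩)]
  · simp
  · simp
  · rintro x y -
    have hE := orb_equiv {(K m p).theta 0, (K m p).theta 1, (K m p).theta 2}
    have hsub : ({(K m p).theta 0, (K m p).theta 2} : Set _) ⊆
      {(K m p).theta 0, (K m p).theta 1, (K m p).theta 2} := by
      intro f; simp; tauto
    by_cases h : x.1 = y.1
    · exact orb_mono hsub ((edge_rel p x y).2 h)
    · refine hE.trans (orb_step (f := (K m p).theta 1) (by simp) x)
        (orb_mono hsub ((edge_rel p _ y).2 ?_))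
      simp only [K]
      revert h
      cases hx : x.1 <;> cases hy : y.1 <;> simp [hx]

/-- the map `(s, x) ↦ (s, h s x)` -/
def G {m : ℕ} (h : Bool → C m → C m) (x : Bool × C m) : Bool × C m := (x.1, h x.1 x.2)
def T {m : ℕ} (x : Bool × C m) : Bool × C m := (!x.1, x.2)

lemma orb_T {m : ℕ} {fs : Set (Bool × C m → Bool × C m)} (hT : T ∈ fs) (s s' : Bool) (x : C m) :
    orbitRel fs (s, x) (s', x) := by
  have hE := orb_equiv fs
  have := orb_step hT (s, x)
  by_cases h : s = s'
  · subst h; exact hE.refl _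
  · have : s' = !s := by cases s <;> cases s' <;> simp_all
    subst this
    exact orb_step hT (s, x)

lemma cnt_mixed {m : ℕ} [NeZero m] (h : Bool → C m → C m) (s : Bool)
    (h0 : h s = t0) (h2 : h (!s) = t2) : orbitCount {T, G h} = 1 := by
  rw [orb_count (β := Unit) (fun _ => ()) (fun _ => ⟨(true, 0, true), rfl⟩)]
  · simp
  · simp
  · rintro ⟨a, x⟩ ⟨b, y⟩ -
    have hE := orb_equiv {T, G h}
    have hT : ∀ s s' x, orbitRel {T, G h} (s, x) (s', x) := orb_T (by simp)
    have hG : ∀ s x, orbitRel {T, G h} (s, x) (s, h s x) :=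
      fun s x => orb_step (f := G h) (by simp) (s, x)
    refine hE.trans (hE.trans (hT a true x) ?_) (hT true b y)
    refine conn (fun x y => orbitRel {T, G h} (true, x) (true, y))
      ⟨fun _ => hE.refl _, fun h => hE.symm h, fun h h' => hE.trans h h'⟩ ?_ ?_ x y
    · intro z
      have := hG s z
      rw [h0] at this
      exact hE.trans (hE.trans (hT _ _ _) this) (hT _ _ _)
    · intro z
      have := hG (!s) z
      rw [h2] at this
      exact hE.trans (hE.trans (hT _ _ _) this) (hT _ _ _)

lemma cnt_const {m : ℕ} [NeZero m] (g : C m → C m) (q : C m → ZMod m)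
    (hs : Function.Surjective q) (hg : ∀ x, q (g x) = q x)
    (hq : ∀ x y, q x = q y → x = y ∨ y = g x) (h : Bool → C m → C m) (hh : ∀ s, h s = g) :
    orbitCount {T, G h} = m := by
  rw [orb_count (β := ZMod m) (fun x => q x.2)]
  · simp
  · intro i
    obtain ⟨x, rfl⟩ := hs i
    exact ⟨(true, x), rfl⟩
  · rintro f (rfl | rfl) x
    · simp [T]
    · simp [G, hh, hg]
  · rintro ⟨a, x⟩ ⟨b, y⟩ hxy
    have hE := orb_equiv {T, G h}
    have hT : ∀ s s' x, orbitRel {T, G h} (s, x) (s', x) := orb_T (by simp)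
    rcases hq x y hxy with rfl | rfl
    · exact hT _ _ _
    · have := orb_step (fs := {T, G h}) (f := G h) (by simp) (a, x)
      simp only [G, hh] at this
      exact hE.trans this (hT _ _ _)

lemma cnt_t0 {m : ℕ} [NeZero m] (h : Bool → C m → C m) (hh : ∀ s, h s = t0) :
    orbitCount {T, G h} = m := by
  refine cnt_const t0 Prod.fst Prod.fst_surjective (fun _ => rfl) ?_ h hh
  rintro ⟨i, b⟩ ⟨j, c⟩ hij
  cases b <;> cases c <;> simp_all [t0]

lemma cnt_t2 {m : ℕ} [NeZero m] (h : Bool → C m → C m) (hh : ∀ s, h s = t2) :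
    orbitCount {T, G h} = m := by
  refine cnt_const t2 (fun x => if x.2 then x.1 + 1 else x.1) (fun i => ⟨(i, false), by simp⟩)
    ?_ ?_ h hh
  · rintro ⟨i, b⟩
    cases b <;> simp [t2]
  · rintro ⟨i, b⟩ ⟨j, c⟩ hij
    cases b <;> cases c <;> simp_all [t2]

lemma v_def {m : ℕ} (p : Bool → Bool) :
    (K m p).v = orbitCount {T (m := m), G (m := m) (fun s => if p s then t0 else t2)} := by
  unfold PreHypermap.v
  congr 2
  simp only [Set.singleton_eq_singleton_iff]
  funext x
  cases h : p x.1 <;> simp [K, G, h]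

lemma f_def {m : ℕ} (p : Bool → Bool) :
    (K m p).f = orbitCount {T (m := m), G (m := m) (fun s => if p s then t2 else t0)} := by
  unfold PreHypermap.f
  rw [Set.pair_comm]
  congr 2
  simp only [Set.singleton_eq_singleton_iff]
  funext x
  cases h : p x.1 <;> simp [K, G, h]

lemma genus_const {m : ℕ} [NeZero m] (p : Bool → Bool) (hp : p true = p false) :
    (K m p).eulerGenus = 0 := by
  have hv : (K m p).v = m := by
    rw [v_def]
    cases h : p true
    · exact cnt_t2 _ (by intro s; cases s <;> simp [h, ← hp])
    · exact cnt_t0 _ (by intro s; cases s <;> simp [h, ← hp])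
  have hf : (K m p).f = m := by
    rw [f_def]
    cases h : p true
    · exact cnt_t0 _ (by intro s; cases s <;> simp [h, ← hp])
    · exact cnt_t2 _ (by intro s; cases s <;> simp [h, ← hp])
  simp only [eulerGenus, chi, hv, hf, e_eq, c_eq, Nat.card_prod, Nat.card_zmod]
  simp
  omega

lemma genus_mixed {m : ℕ} [NeZero m] (p : Bool → Bool) (hp : p true = !p false) :
    (K m p).eulerGenus = 2 * m - 2 := by
  have hv : (K m p).v = 1 := by
    rw [v_def]
    cases h : p true
    · exact cnt_mixed _ false (by simp_all) (by simp_all)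
    · exact cnt_mixed _ true (by simp_all) (by simp_all)
  have hf : (K m p).f = 1 := by
    rw [f_def]
    cases h : p true
    · exact cnt_mixed _ true (by simp_all) (by simp_all)
    · exact cnt_mixed _ false (by simp_all) (by simp_all)
  simp only [eulerGenus, chi, hv, hf, e_eq, c_eq, Nat.card_prod, Nat.card_zmod]
  simp
  omega

lemma pdual_eq {m : ℕ} (p : Bool → Bool) (S : Set (Bool × C m))
    (hS : ∀ x, x ∈ S ↔ p x.1 = true) : (K m (fun _ => false)).pdual S = K m p := by
  have : ∀ i, ((K m (fun _ => false)).pdual S).theta i = (K m p).theta i := by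
    intro i
    funext x
    fin_cases i <;> cases h : p x.1 <;> simp [pdual, K, hS, h]
  exact congrArg PreHypermap.mk (funext this)

lemma exists_p {m : ℕ} [NeZero m] (A : Set (Set (Bool × C m)))
    (hA : A ⊆ (K m (fun _ => false)).edges) :
    ∃ p : Bool → Bool, ∀ x, x ∈ ⋃₀ A ↔ p x.1 = true := by
  refine ⟨fun s => decide ((s, ((0 : ZMod m), false)) ∈ ⋃₀ A), ?_⟩
  intro x
  simp only [decide_eq_true_eq, Set.mem_sUnion]
  refine exists_congr fun t => and_congr_right fun ht => ?_
  obtain ⟨y, rfl⟩ := hA ht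
  simp only [Set.mem_ofPred_eq, edge_rel]

lemma main (m : ℕ) [NeZero m] (hm : 2 ≤ m) :
      ∃ (F : Type) (_ : Fintype F) (H : PreHypermap F), H.IsHypermap ∧ H.Connected ∧
        ∃ a b : ℤ, a < b ∧
          (∃ A ⊆ H.edges, (H.pdual (⋃₀ A)).eulerGenus = a) ∧
          (∃ B ⊆ H.edges, (H.pdual (⋃₀ B)).eulerGenus = b) ∧
          (∀ C ⊆ H.edges,
            ¬ (a < (H.pdual (⋃₀ C)).eulerGenus ∧ (H.pdual (⋃₀ C)).eulerGenus < b)) ∧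
          (m : ℤ) - 2 ≤ b - a - 1 := by
  refine ⟨Bool × C m, Fintype.ofFinite _, K m (fun _ => false), K_hyper _ _, c_eq _,
    0, 2 * m - 2, by omega, ⟨∅, by simp, ?_⟩,
    ⟨{{y | orbitRel {(K m (fun _ => false)).theta 0, (K m (fun _ => false)).theta 2}
      (true, ((0 : ZMod m), false)) y}}, ?_, ?_⟩, ?_, by omega⟩
  · rw [pdual_eq (fun _ => false) _ (by simp)]
    exact genus_const _ rfl
  · rintro _ rfl
    exact ⟨_, rfl⟩
  · rw [pdual_eq (fun s => s) _ (by simp [edge_rel])]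
    exact genus_mixed _ rfl
  · intro A hA
    obtain ⟨p, hp⟩ := exists_p A hA
    rw [pdual_eq p _ hp]
    by_cases h : p true = p false
    · rw [genus_const p h]; omega
    · rw [genus_mixed p (by cases h1 : p true <;> cases h2 : p false <;> simp_all)]; omega

end GapProof

open PreHypermap in
/-- Gaps in the spectrum of the partial-dual Euler-genus polynomial can be arbitrarily
large: for every `N > 0` there are a connected hypermap `H` and spectrum values `a < b`
with no spectrum value strictly between them and `b - a - 1 ≥ N`. -/
theorem statement_9 :
    ∀ N : ℕ, 0 < N →
      ∃ (F : Type) (_ : Fintype F) (H : PreHypermap F), H.IsHypermap ∧ H.Connected ∧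
        ∃ a b : ℤ, a < b ∧
          (∃ A ⊆ H.edges, (H.pdual (⋃₀ A)).eulerGenus = a) ∧
          (∃ B ⊆ H.edges, (H.pdual (⋃₀ B)).eulerGenus = b) ∧
          (∀ C ⊆ H.edges,
            ¬ (a < (H.pdual (⋃₀ C)).eulerGenus ∧ (H.pdual (⋃₀ C)).eulerGenus < b)) ∧
          (N : ℤ) ≤ b - a - 1 := by
  intro N hN
  obtain ⟨F, iF, H, h1, h2, a, b, h3, h4, h5, h6, h7⟩ := GapProof.main (N + 2) (by omega)
  exact ⟨F, iF, H, h1, h2, a, b, h3, h4, h5, h6, by push_cast at h7; omega⟩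
end

section
/- There exists a connected orientable combinatorial hypermap H such that 0 and 2 both belong to the set {ε(H^A)/2 : A ⊆ E(H)} of partial-dual orientable genera, but 1 does not; in particular, the set of partial-dual orientable genera of a connected orientable hypermap need not be an interval of integers (the partial-dual genus polynomial is not always interpolating). -/
open Classical

namespace HM10
open PreHypermap

def mn (x y : Fin 12) : Fin 12 := if Nat.ble x.val y.val = true then x else y

def walk : List (Fin 12 → Fin 12) → Fin 12 → Fin 12
  | [], x => x
  | f :: l, x => mn x (walk l (f x))

lemma walk_rel (fs : Set (Fin 12 → Fin 12)) (l : List (Fin 12 → Fin 12))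
    (hl : ∀ f ∈ l, f ∈ fs) (x : Fin 12) : orbitRel fs x (walk l x) := by
  induction l generalizing x with
  | nil => exact Relation.EqvGen.refl _
  | cons f l ih =>
    simp only [walk, mn]
    split_ifs
    · exact Relation.EqvGen.refl _
    · exact Relation.EqvGen.trans _ _ _
        (Relation.EqvGen.rel _ _ ⟨f, hl f (by simp), rfl⟩)
        (ih (fun g hg => hl g (by simp [hg])) (f x))

lemma rel_iff (fs : Set (Fin 12 → Fin 12)) (l : List (Fin 12 → Fin 12))
    (hl : ∀ f ∈ l, f ∈ fs) (hinv : ∀ f ∈ fs, ∀ x, walk l (f x) = walk l x) (x y : Fin 12) :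
    orbitRel fs x y ↔ walk l x = walk l y := by
  constructor
  · intro h
    induction h with
    | rel x y h => obtain ⟨f, hf, rfl⟩ := h; exact (hinv f hf x).symm
    | refl => rfl
    | symm _ _ _ ih => exact ih.symm
    | trans _ _ _ _ _ a b => exact a.trans b
  · intro h
    have h1 := walk_rel fs l hl x
    rw [h] at h1
    exact Relation.EqvGen.trans _ _ _ h1 (Relation.EqvGen.symm _ _ (walk_rel fs l hl y))

lemma count_eq (fs : Set (Fin 12 → Fin 12)) (l : List (Fin 12 → Fin 12))
    (hl : ∀ f ∈ l, f ∈ fs) (hinv : ∀ f ∈ fs, ∀ x, walk l (f x) = walk l x) (n : ℕ)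
    (hn : (Finset.univ.image (walk l)).card = n) :
    orbitCount fs = n := by
  have hs : orbitSetoid fs = Setoid.ker (walk l) := by
    ext x y
    exact rel_iff fs l hl hinv x y
  unfold orbitCount
  rw [hs, Nat.card_congr (Setoid.quotientKerEquivRange (walk l)), ← hn]
  rw [← Set.ncard_coe_finset, Finset.coe_image, Finset.coe_univ, Set.image_univ]
  rfl

def t : Fin 3 → Fin 12 → Fin 12 :=
  ![![1, 0, 3, 2, 5, 4, 7, 6, 9, 8, 11, 10], ![7, 6, 11, 10, 9, 8, 1, 0, 5, 4, 3, 2],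
    ![5, 2, 1, 4, 3, 0, 11, 8, 7, 10, 9, 6]]

def H : PreHypermap (Fin 12) := ⟨t⟩

def inS (a b : Bool) (x : Fin 12) : Bool := if x.val < 6 then a else b

def tt (a b : Bool) (i : Fin 3) (x : Fin 12) : Fin 12 :=
  bif inS a b x then t (2 - i) x else t i x

lemma pd (a b : Bool) : H.pdual {x | inS a b x = true} = ⟨tt a b⟩ := by
  unfold pdual H
  congr 1
  funext i x
  simp only [tt, Set.mem_ofPred_eq]
  by_cases hi : i = 1
  · subst hi; cases inS a b x <;> rfl
  · rw [if_neg hi]; cases inS a b x <;> simp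

def alt (f g : Fin 12 → Fin 12) : List (Fin 12 → Fin 12) := [f, g, f, g, f, g, f, g, f, g, f, g]

lemma count2 (f g : Fin 12 → Fin 12) (n : ℕ)
    (h1 : ∀ x, walk (alt f g) (f x) = walk (alt f g) x)
    (h2 : ∀ x, walk (alt f g) (g x) = walk (alt f g) x)
    (hn : (Finset.univ.image (walk (alt f g))).card = n) : orbitCount {f, g} = n := by
  apply count_eq _ (alt f g) _ _ _ hn
  · simp [alt]
  · intro k hk x
    rcases hk with hk | hk
    · rw [hk]; exact h1 x
    · rw [show k = g from hk]; exact h2 x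

def alt3 (f g h : Fin 12 → Fin 12) : List (Fin 12 → Fin 12) := alt f g ++ (h :: alt f g) ++
  (h :: alt f g) ++ (h :: alt f g)

lemma count3 (f g h : Fin 12 → Fin 12) 
    (h1 : ∀ x, walk (alt3 f g h) x = 0) : orbitCount {f, g, h} = 1 := by
  apply count_eq _ (alt3 f g h)
  · simp only [alt3, alt, List.forall_mem_append, List.forall_mem_cons]; simp
  · intro k hk x; rw [h1, h1]
  · rw [show walk (alt3 f g h) = fun _ => 0 from funext h1]; decide

lemma c_eq (a b : Bool) : (⟨tt a b⟩ : PreHypermap (Fin 12)).c = 1 := by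
  unfold c
  rw [Set.pair_comm]
  apply count3
  revert a b; decide +kernel

lemma e_eq (a b : Bool) : (⟨tt a b⟩ : PreHypermap (Fin 12)).e = 2 := by
  apply count2 <;> revert a b <;> decide +kernel

def vn (a b : Bool) : ℕ := (Finset.univ.image (walk (alt (tt a b 1) (tt a b 2)))).card
def fn (a b : Bool) : ℕ := (Finset.univ.image (walk (alt (tt a b 0) (tt a b 1)))).card

lemma v_eq (a b : Bool) : (⟨tt a b⟩ : PreHypermap (Fin 12)).v = vn a b := by
  apply count2 _ _ _ _ _ rfl <;> revert a b <;> decide +kernel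

lemma f_eq (a b : Bool) : (⟨tt a b⟩ : PreHypermap (Fin 12)).f = fn a b := by
  apply count2 _ _ _ _ _ rfl <;> revert a b <;> decide +kernel

lemma vf (a b : Bool) : vn a b + fn a b = if a = b then 6 else 2 := by
  revert a b; decide +kernel

lemma genus (a b : Bool) :
    (H.pdual {x | inS a b x = true}).eulerGenus / 2 = if a = b then 0 else 2 := by
  rw [pd]
  unfold eulerGenus chi
  rw [c_eq, e_eq, v_eq, f_eq]
  have := vf a b
  simp only [Nat.card_eq_fintype_card, Fintype.card_fin]
  split_ifs at this ⊢ <;> omega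

lemma edge_rel (x y : Fin 12) : orbitRel {H.theta 0, H.theta 2} x y ↔ (x.val < 6 ↔ y.val < 6) := by
  rw [rel_iff _ (alt (H.theta 0) (H.theta 2))]
  · revert x y; decide +kernel
  · simp [alt]
  · intro k hk; rcases hk with rfl | rfl <;> decide +kernel

def E1 : Set (Fin 12) := {x | x.val < 6}
def E2 : Set (Fin 12) := {x | ¬ x.val < 6}

lemma E1_mem : E1 ∈ H.edges := ⟨0, by ext y; simp [E1, edge_rel]⟩

lemma edges_cases (s : Set (Fin 12)) (hs : s ∈ H.edges) : s = E1 ∨ s = E2 := by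
  obtain ⟨x, rfl⟩ := hs
  by_cases hx : x.val < 6
  · left; ext y; simp [E1, edge_rel, hx]
  · right; ext y; simp only [E2, edge_rel, hx, Set.mem_ofPred_eq, false_iff]

lemma union_eq (C : Set (Set (Fin 12))) (hC : C ⊆ H.edges) :
    ∃ a b, ⋃₀ C = {x | inS a b x = true} := by
  classical
  refine ⟨decide (E1 ∈ C), decide (E2 ∈ C), ?_⟩
  ext x
  simp only [Set.mem_sUnion, Set.mem_ofPred_eq, inS]
  constructor
  · rintro ⟨s, hs, hx⟩
    rcases edges_cases s (hC hs) with rfl | rfl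
    · simp only [E1, Set.mem_ofPred_eq] at hx
      rw [if_pos hx]; exact decide_eq_true hs
    · simp only [E2, Set.mem_ofPred_eq] at hx
      rw [if_neg hx]; exact decide_eq_true hs
  · intro h
    split_ifs at h with hx
    · exact ⟨E1, of_decide_eq_true h, hx⟩
    · exact ⟨E2, of_decide_eq_true h, hx⟩

end HM10

open PreHypermap in
/-- There is a connected orientable hypermap whose set of partial-dual orientable genera
`{ε(H^A)/2 : A ⊆ E(H)}` contains `0` and `2` but not `1`: the partial-dual genus
polynomial is not always interpolating. -/
theorem statement_10 :
    ∃ (F : Type) (_ : Fintype F) (H : PreHypermap F),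
      H.IsHypermap ∧ H.Connected ∧ H.Orientable ∧
      (∃ A ⊆ H.edges, (H.pdual (⋃₀ A)).eulerGenus / 2 = 0) ∧
      (∃ B ⊆ H.edges, (H.pdual (⋃₀ B)).eulerGenus / 2 = 2) ∧
      (∀ C ⊆ H.edges, (H.pdual (⋃₀ C)).eulerGenus / 2 ≠ 1) := by
  refine ⟨Fin 12, inferInstance, HM10.H, ?_, ?_, ?_, ?_, ?_, ?_⟩
  · intro i
    refine ⟨?_, ?_⟩
    · unfold Function.Involutive; revert i; decide +kernel
    · revert i; decide +kernel
  · have h : HM10.H = ⟨HM10.tt false false⟩ := by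
      unfold HM10.H; congr 1; funext i x; simp [HM10.tt, HM10.inS]
    unfold Connected
    rw [h]; exact HM10.c_eq _ _
  · refine ⟨fun x => if x.val % 2 = 0 then 1 else -1, ?_, ?_⟩
    · intro x; dsimp only; split_ifs <;> simp
    · decide +kernel
  · refine ⟨∅, by simp, ?_⟩
    have := HM10.genus false false
    simpa [HM10.inS] using this
  · refine ⟨{HM10.E1}, by simpa using HM10.E1_mem, ?_⟩
    have := HM10.genus true false
    simpa [HM10.inS, HM10.E1] using this
  · intro C hC
    obtain ⟨a, b, h⟩ := HM10.union_eq C hC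
    rw [h, HM10.genus]
    split_ifs <;> decide
end

section
/- Let H₁ and H₂ be connected combinatorial hypermaps on disjoint flag sets, and let H₁ ∨ H₂ be their join at any chosen corners. Then H₁ ∨ H₂ is connected, χ(H₁ ∨ H₂) = χ(H₁) + χ(H₂) − 2, and ε(H₁ ∨ H₂) = ε(H₁) + ε(H₂). -/
open Classical

namespace PreHypermap

theorem even_of_invol {F : Type*} (s : Finset F) (g : F → F)
    (hg : Function.Involutive g) (hf : ∀ z ∈ s, g z ≠ z) (hs : ∀ z ∈ s, g z ∈ s) :
    Even s.card := by
  have h : ∑ z ∈ s, (1 : ZMod 2) = 0 := by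
    refine Finset.sum_involution (fun a _ => g a) ?_ ?_ ?_ ?_
    · intro a _; decide
    · intro a ha _; exact hf a ha
    · intro a ha; exact hs a ha
    · intro a ha; exact hg a
  simp only [Finset.sum_const, nsmul_eq_mul, mul_one] at h
  exact (ZMod.natCast_eq_zero_iff_even).1 h

theorem key {F G : Type*} [Fintype F] (T : Setoid G) (j : F → G) (a b : F → F)
    (ha : Function.Involutive a) (ha' : ∀ z, a z ≠ z)
    (hb : Function.Involutive b) (hb' : ∀ z, b z ≠ z) (x : F)
    (h1 : ∀ z, T (j z) (j (b z))) (h2 : ∀ z, z ≠ x → z ≠ a x → T (j z) (j (a z))) :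
    T (j x) (j (a x)) := by
  by_contra hn
  let C : Finset F := Finset.univ.filter fun z => T (j x) (j z)
  have hC : ∀ z, z ∈ C ↔ T (j x) (j z) := by intro z; simp [C]
  have hx : x ∈ C := (hC x).2 (T.refl _)
  have e1 : Even C.card := by
    refine even_of_invol C b hb (fun z _ => hb' z) ?_
    intro z hz
    rw [hC] at *
    exact T.trans hz (h1 z)
  have e2 : Even (C.erase x).card := by
    refine even_of_invol _ a ha (fun z _ => ha' z) ?_
    intro z hz
    rw [Finset.mem_erase, hC] at *
    have hzax : z ≠ a x := by rintro rfl; exact hn hz.2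
    refine ⟨?_, T.trans hz.2 (h2 z hz.1 hzax)⟩
    intro h
    apply hzax
    rw [← h, ha]
  have := Finset.card_erase_add_one hx
  rw [← this] at e1
  exact (Nat.even_add_one.1 e1) e2

theorem card_of_ker {G Q : Type*} (T : Setoid G) (Φ : G → Q) (hs : Function.Surjective Φ)
    (hk : ∀ z w, T z w ↔ Φ z = Φ w) : Nat.card (Quotient T) = Nat.card Q := by
  have : T = Setoid.ker Φ := by
    ext z w; rw [hk]; rfl
  subst this
  exact Nat.card_congr (Setoid.quotientKerEquivOfSurjective Φ hs)

variable {F₁ F₂ : Type*}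

def OS {F : Type*} (H : PreHypermap F) (I : Set (Fin 3)) : Setoid F := orbitSetoid (H.theta '' I)

theorem OS_step {F : Type*} (H : PreHypermap F) (I : Set (Fin 3)) {i : Fin 3} (hi : i ∈ I) (z : F) :
    (OS H I) z (H.theta i z) :=
  Relation.EqvGen.rel _ _ ⟨_, ⟨i, hi, rfl⟩, rfl⟩

theorem OS_le {F : Type*} (H : PreHypermap F) (I : Set (Fin 3)) (S : Setoid F)
    (h : ∀ i ∈ I, ∀ z, S z (H.theta i z)) {z w : F} (hzw : (OS H I) z w) : S z w := by
  have hzw' : Relation.EqvGen (fun x y => ∃ f ∈ H.theta '' I, f x = y) z w := hzw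
  induction hzw' with
  | rel a b hab =>
    obtain ⟨_, ⟨i, hi, rfl⟩, rfl⟩ := hab
    exact h i hi a
  | refl a => exact S.refl a
  | symm a b h ih => exact S.symm (ih h)
  | trans a b c h h' ih ih' => exact S.trans (ih h) (ih' h')

theorem join_ne (H₁ : PreHypermap F₁) (H₂ : PreHypermap F₂) (x : F₁) (y : F₂) {i : Fin 3}
    (hi : i ≠ 1) (z : F₁ ⊕ F₂) :
    (join H₁ H₂ x y).theta i z = Sum.map (H₁.theta i) (H₂.theta i) z := by
  simp [join, hi]

theorem join_inl (H₁ : PreHypermap F₁) (H₂ : PreHypermap F₂) (x : F₁) (y : F₂) (z : F₁)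
    (h : z ≠ x) (h' : z ≠ H₁.theta 1 x) :
    (join H₁ H₂ x y).theta 1 (Sum.inl z) = Sum.inl (H₁.theta 1 z) := by
  simp [join, h, h']

theorem join_inr (H₁ : PreHypermap F₁) (H₂ : PreHypermap F₂) (x : F₁) (y : F₂) (z : F₂)
    (h : z ≠ y) (h' : z ≠ H₂.theta 1 y) :
    (join H₁ H₂ x y).theta 1 (Sum.inr z) = Sum.inr (H₂.theta 1 z) := by
  simp [join, h, h']

theorem join_x (H₁ : PreHypermap F₁) (H₂ : PreHypermap F₂) (x : F₁) (y : F₂) :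
    (join H₁ H₂ x y).theta 1 (Sum.inl x) = Sum.inr y := by
  simp [join]

/-- Orbit count when index 1 is absent. -/
theorem count_without (H₁ : PreHypermap F₁) (H₂ : PreHypermap F₂) [Finite F₁] [Finite F₂]
    (x : F₁) (y : F₂) (I : Set (Fin 3)) (hI : 1 ∉ I) :
    Nat.card (Quotient (OS (join H₁ H₂ x y) I)) =
      Nat.card (Quotient (OS H₁ I)) + Nat.card (Quotient (OS H₂ I)) := by
  rw [← Nat.card_sum]
  have hne : ∀ i ∈ I, i ≠ 1 := by rintro i hi rfl; exact hI hi
  have hl : ∀ z w, (OS H₁ I) z w → (OS (join H₁ H₂ x y) I) (Sum.inl z) (Sum.inl w) := by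
    intro z w h
    refine OS_le H₁ I ((OS (join H₁ H₂ x y) I).comap Sum.inl) ?_ h
    intro i hi z
    have := OS_step (join H₁ H₂ x y) I hi (Sum.inl z)
    rwa [join_ne _ _ _ _ (hne i hi)] at this
  have hr : ∀ z w, (OS H₂ I) z w → (OS (join H₁ H₂ x y) I) (Sum.inr z) (Sum.inr w) := by
    intro z w h
    refine OS_le H₂ I ((OS (join H₁ H₂ x y) I).comap Sum.inr) ?_ h
    intro i hi z
    have := OS_step (join H₁ H₂ x y) I hi (Sum.inr z)
    rwa [join_ne _ _ _ _ (hne i hi)] at this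
  let Φ : F₁ ⊕ F₂ → Quotient (OS H₁ I) ⊕ Quotient (OS H₂ I) :=
    Sum.map (Quotient.mk _) (Quotient.mk _)
  refine card_of_ker _ Φ ?_ ?_
  · exact Function.Surjective.sumMap Quotient.mk_surjective Quotient.mk_surjective
  · intro z w
    constructor
    · intro h
      refine OS_le _ I (Setoid.ker Φ) ?_ h
      intro i hi z
      rw [join_ne _ _ _ _ (hne i hi)]
      rcases z with z | z
      · exact congrArg Sum.inl (Quotient.sound (OS_step H₁ I hi z))
      · exact congrArg Sum.inr (Quotient.sound (OS_step H₂ I hi z))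
    · intro h
      rcases z with z | z <;> rcases w with w | w
      · exact hl _ _ (Quotient.exact (Sum.inl.inj h))
      · cases h
      · cases h
      · exact hr _ _ (Quotient.exact (Sum.inr.inj h))

/-- Orbit count when index 1 and another index are present. -/
theorem count_with (H₁ : PreHypermap F₁) (H₂ : PreHypermap F₂) [Fintype F₁] [Fintype F₂]
    (h₁ : H₁.IsHypermap) (h₂ : H₂.IsHypermap)
    (x : F₁) (y : F₂) (I : Set (Fin 3)) (hI : 1 ∈ I) (k : Fin 3) (hk : k ∈ I) (hk1 : k ≠ 1) :
    Nat.card (Quotient (OS (join H₁ H₂ x y) I)) + 1 =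
      Nat.card (Quotient (OS H₁ I)) + Nat.card (Quotient (OS H₂ I)) := by
  set T := OS (join H₁ H₂ x y) I with hT
  have hxy : T (Sum.inl x) (Sum.inr y) := by
    have := OS_step (join H₁ H₂ x y) I hI (Sum.inl x)
    rwa [join_x] at this
  have sl : ∀ i ∈ I, i ≠ 1 → ∀ z, T (Sum.inl z) (Sum.inl (H₁.theta i z)) := by
    intro i hi h z
    have := OS_step (join H₁ H₂ x y) I hi (Sum.inl z)
    rwa [join_ne _ _ _ _ h] at this
  have sr : ∀ i ∈ I, i ≠ 1 → ∀ z, T (Sum.inr z) (Sum.inr (H₂.theta i z)) := by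
    intro i hi h z
    have := OS_step (join H₁ H₂ x y) I hi (Sum.inr z)
    rwa [join_ne _ _ _ _ h] at this
  have sl1 : ∀ z, z ≠ x → z ≠ H₁.theta 1 x → T (Sum.inl z) (Sum.inl (H₁.theta 1 z)) := by
    intro z h h'
    have := OS_step (join H₁ H₂ x y) I hI (Sum.inl z)
    rwa [join_inl _ _ _ _ _ h h'] at this
  have sr1 : ∀ z, z ≠ y → z ≠ H₂.theta 1 y → T (Sum.inr z) (Sum.inr (H₂.theta 1 z)) := by
    intro z h h'
    have := OS_step (join H₁ H₂ x y) I hI (Sum.inr z)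
    rwa [join_inr _ _ _ _ _ h h'] at this
  have kx : T (Sum.inl x) (Sum.inl (H₁.theta 1 x)) :=
    key T Sum.inl (H₁.theta 1) (H₁.theta k) (h₁ 1).1 (h₁ 1).2 (h₁ k).1 (h₁ k).2 x
      (sl k hk hk1) sl1
  have ky : T (Sum.inr y) (Sum.inr (H₂.theta 1 y)) :=
    key T Sum.inr (H₂.theta 1) (H₂.theta k) (h₂ 1).1 (h₂ 1).2 (h₂ k).1 (h₂ k).2 y
      (sr k hk hk1) sr1
  have hl : ∀ z w, (OS H₁ I) z w → T (Sum.inl z) (Sum.inl w) := by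
    intro z w h
    refine OS_le H₁ I (T.comap Sum.inl) ?_ h
    intro i hi z
    show T (Sum.inl z) (Sum.inl (H₁.theta i z))
    by_cases h1 : i = 1
    · subst h1
      by_cases hz : z = x
      · rw [hz]; exact kx
      by_cases hz' : z = H₁.theta 1 x
      · rw [hz', (h₁ 1).1 x]; exact T.symm kx
      exact sl1 z hz hz'
    · exact sl i hi h1 z
  have hr : ∀ z w, (OS H₂ I) z w → T (Sum.inr z) (Sum.inr w) := by
    intro z w h
    refine OS_le H₂ I (T.comap Sum.inr) ?_ h
    intro i hi z
    show T (Sum.inr z) (Sum.inr (H₂.theta i z))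
    by_cases h1 : i = 1
    · subst h1
      by_cases hz : z = y
      · rw [hz]; exact ky
      by_cases hz' : z = H₂.theta 1 y
      · rw [hz', (h₂ 1).1 y]; exact T.symm ky
      exact sr1 z hz hz'
    · exact sr i hi h1 z
  let q1 : F₁ → Quotient (OS H₁ I) := Quotient.mk _
  let q2 : F₂ → Quotient (OS H₂ I) := Quotient.mk _
  have e1 : ∀ i ∈ I, ∀ z, q1 (H₁.theta i z) = q1 z := fun i hi z =>
    (Quotient.sound (OS_step H₁ I hi z)).symm
  have e2 : ∀ i ∈ I, ∀ z, q2 (H₂.theta i z) = q2 z := fun i hi z =>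
    (Quotient.sound (OS_step H₂ I hi z)).symm
  let g : F₂ → Quotient (OS H₁ I) ⊕ {q : Quotient (OS H₂ I) // q ≠ q2 y} := fun w =>
    if h : q2 w = q2 y then Sum.inl (q1 x) else Sum.inr ⟨q2 w, h⟩
  have gpos : ∀ w, q2 w = q2 y → g w = Sum.inl (q1 x) := fun w h => dif_pos h
  have gneg : ∀ w (h : q2 w ≠ q2 y), g w = Sum.inr ⟨q2 w, h⟩ := fun w h => dif_neg h
  have gcongr' : ∀ w w', q2 w = q2 w' → g w = g w' := by
    intro w w' h
    by_cases hw : q2 w = q2 y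
    · rw [gpos w hw, gpos w' (h ▸ hw)]
    · rw [gneg w hw, gneg w' (h ▸ hw)]
      simp [h]
  let Φ : F₁ ⊕ F₂ → Quotient (OS H₁ I) ⊕ {q : Quotient (OS H₂ I) // q ≠ q2 y} :=
    Sum.elim (fun z => Sum.inl (q1 z)) g
  have hcard : Nat.card (Quotient T) =
      Nat.card (Quotient (OS H₁ I) ⊕ {q : Quotient (OS H₂ I) // q ≠ q2 y}) := by
    refine card_of_ker _ Φ ?_ ?_
    · rintro (q | ⟨q, hq⟩)
      · obtain ⟨z, rfl⟩ := Quotient.mk_surjective q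
        exact ⟨Sum.inl z, rfl⟩
      · obtain ⟨z, rfl⟩ := Quotient.mk_surjective q
        exact ⟨Sum.inr z, gneg z hq⟩
    · intro z w
      constructor
      · intro h
        refine OS_le _ I (Setoid.ker Φ) ?_ h
        intro i hi z
        show Φ z = Φ _
        by_cases h1 : i = 1
        · subst h1
          have a1 := gpos y rfl
          have a2 := gpos (H₂.theta 1 y) (e2 1 hI y)
          have a3 := e1 1 hI x
          simp only [join, if_true]
          split_ifs with c1 c2 c3 c4
          · subst c1; exact a1.symm
          · subst c2; exact a1
          · subst c3
            show Sum.inl (q1 _) = g _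
            rw [a2, a3]
          · subst c4
            show g _ = Sum.inl (q1 _)
            rw [a2, a3]
          · rcases z with z | z
            · exact congrArg Sum.inl (e1 1 hI z).symm
            · exact gcongr' _ _ (e2 1 hI z).symm
        · rw [join_ne _ _ _ _ h1]
          rcases z with z | z
          · exact congrArg Sum.inl (e1 i hi z).symm
          · exact gcongr' _ _ (e2 i hi z).symm
      · have mix : ∀ z w, Sum.inl (q1 z) = g w → T (Sum.inl z) (Sum.inr w) := by
          intro z w h
          by_cases hw : q2 w = q2 y
          · rw [gpos w hw] at h
            exact T.trans (hl _ _ (Quotient.exact (Sum.inl.inj h)))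
              (T.trans hxy (hr _ _ (Quotient.exact hw.symm)))
          · rw [gneg w hw] at h; cases h
        intro h
        rcases z with z | z <;> rcases w with w | w
        · exact hl _ _ (Quotient.exact (Sum.inl.inj h))
        · exact mix _ _ h
        · exact T.symm (mix _ _ h.symm)
        · replace h : g z = g w := h
          by_cases hz : q2 z = q2 y
          · rw [gpos z hz] at h
            exact T.trans (T.trans (hr _ _ (Quotient.exact hz)) (T.symm hxy)) (mix _ _ h)
          · by_cases hw : q2 w = q2 y
            · rw [gpos w hw, gneg z hz] at h; cases h
            · rw [gneg w hw, gneg z hz] at h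
              have := congrArg Subtype.val (Sum.inr.inj h)
              exact hr _ _ (Quotient.exact this)
  have hsub : Nat.card {q : Quotient (OS H₂ I) // q ≠ q2 y} + 1 =
      Nat.card (Quotient (OS H₂ I)) := by
    rw [← Finite.card_option]
    exact Nat.card_congr (Equiv.optionSubtypeNe (q2 y))
  rw [hcard, Nat.card_sum]
  omega

theorem v_eq {F : Type*} (H : PreHypermap F) : H.v = Nat.card (Quotient (OS H {1, 2})) := by
  simp only [v, orbitCount, OS, Set.image_insert_eq, Set.image_singleton]

theorem e_eq {F : Type*} (H : PreHypermap F) : H.e = Nat.card (Quotient (OS H {0, 2})) := by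
  simp only [e, orbitCount, OS, Set.image_insert_eq, Set.image_singleton]

theorem f_eq {F : Type*} (H : PreHypermap F) : H.f = Nat.card (Quotient (OS H {0, 1})) := by
  simp only [f, orbitCount, OS, Set.image_insert_eq, Set.image_singleton]

theorem c_eq {F : Type*} (H : PreHypermap F) : H.c = Nat.card (Quotient (OS H {0, 1, 2})) := by
  simp only [c, orbitCount, OS, Set.image_insert_eq, Set.image_singleton]

theorem even_card {F : Type*} [Fintype F] (H : PreHypermap F) (h : H.IsHypermap) :
    Even (Nat.card F) := by
  rw [Nat.card_eq_fintype_card]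
  exact even_of_invol Finset.univ (H.theta 0) (h 0).1 (fun z _ => (h 0).2 z)
    (fun z _ => Finset.mem_univ _)

end PreHypermap

open PreHypermap in
/-- The join of two connected hypermaps (at any chosen corners) is connected,
`χ(H₁ ∨ H₂) = χ(H₁) + χ(H₂) - 2` and `ε(H₁ ∨ H₂) = ε(H₁) + ε(H₂)`. -/
theorem statement_11 {F₁ F₂ : Type} [Fintype F₁] [Fintype F₂]
    (H₁ : PreHypermap F₁) (H₂ : PreHypermap F₂)
    (h₁ : H₁.IsHypermap) (h₂ : H₂.IsHypermap)
    (hc₁ : H₁.Connected) (hc₂ : H₂.Connected) (x : F₁) (y : F₂) :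
    (join H₁ H₂ x y).Connected ∧
    (join H₁ H₂ x y).chi = H₁.chi + H₂.chi - 2 ∧
    (join H₁ H₂ x y).eulerGenus = H₁.eulerGenus + H₂.eulerGenus := by
  have hv := count_with H₁ H₂ h₁ h₂ x y {1, 2} (by simp) 2 (by simp) (by decide)
  have hf := count_with H₁ H₂ h₁ h₂ x y {0, 1} (by simp) 0 (by simp) (by decide)
  have hc := count_with H₁ H₂ h₁ h₂ x y {0, 1, 2} (by simp) 0 (by simp) (by decide)
  have he := count_without H₁ H₂ x y {0, 2} (by simp)
  rw [← v_eq, ← v_eq, ← v_eq] at hv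
  rw [← f_eq, ← f_eq, ← f_eq] at hf
  rw [← c_eq, ← c_eq, ← c_eq] at hc
  rw [← e_eq, ← e_eq, ← e_eq] at he
  obtain ⟨m, hm⟩ := even_card H₁ h₁
  obtain ⟨n, hn⟩ := even_card H₂ h₂
  have hs : Nat.card (F₁ ⊕ F₂) = Nat.card F₁ + Nat.card F₂ := Nat.card_sum
  unfold Connected at *
  unfold eulerGenus chi
  rw [hs, hm, hn]
  push_cast
  refine ⟨by omega, by omega, by omega⟩
end
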